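/- Let F be a commutative ring containing the field ℚ of rational numbers and let A be a commutative F-algebra, flat as an F-module, generated as an F-algebra by finitely many elements a_1, …, a_m. Then TS^n_F(A) is generated as an F-algebra by the elements e_1^n(a), where a ranges over the monomials a_1^{α_1}⋯a_m^{α_m} of total degree α_1+⋯+α_m ≤ n. -/

import Mathlib

open scoped TensorProduct
open PiTensorProduct

universe u v w

namespace SymmetricProduct

variable (F : Type u) [CommRing F] (A : Type v) [CommRing A] [Algebra F A] (n : ℕ)

/-- The algebra homomorphism on the `n`-fold tensor power permuting factors by `σ`. -/
noncomputable def permHom (σ : Equiv.Perm (Fin n)) :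
    (⨂[F] _ : Fin n, A) →ₐ[F] (⨂[F] _ : Fin n, A) :=
  PiTensorProduct.liftAlgHom (MultilinearMap.domDomCongr σ (PiTensorProduct.tprod F))
    (by simp [MultilinearMap.domDomCongr_apply]; rfl)
    (fun x y => by
      simp only [MultilinearMap.domDomCongr_apply]
      rw [tprod_mul_tprod]; rfl)

@[simp] lemma permHom_tprod (σ : Equiv.Perm (Fin n)) (x : Fin n → A) :
    permHom F A n σ (tprod F x) = tprod F (fun i => x (σ i)) := by
  simp [permHom]

/-- `TS^n_F(A)`: the subalgebra of symmetric tensors in the `n`-fold tensor power of `A`. -/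
noncomputable def TS : Subalgebra F (⨂[F] _ : Fin n, A) where
  carrier := {x | ∀ σ : Equiv.Perm (Fin n), permHom F A n σ x = x}
  mul_mem' := fun hx hy σ => by rw [_root_.map_mul, hx σ, hy σ]
  add_mem' := fun hx hy σ => by rw [_root_.map_add, hx σ, hy σ]
  one_mem' := fun σ => map_one _
  algebraMap_mem' := fun r σ => AlgHom.commutes _ r

/-- `e_i^n(a)`: the sum over `i`-element subsets `S` of `Fin n` of the elementary tensors
having `a` in the slots of `S` and `1` elsewhere. -/
noncomputable def esym (i : ℕ) (a : A) : ⨂[F] _ : Fin n, A :=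
  ∑ S ∈ Finset.powersetCard i (Finset.univ : Finset (Fin n)),
    tprod F (fun j => if j ∈ S then a else 1)

lemma esym_mem (i : ℕ) (a : A) : esym F A n i a ∈ TS F A n := by
  intro σ
  rw [esym, map_sum]
  simp only [permHom_tprod]
  refine Finset.sum_nbij' (fun S => S.map σ.symm.toEmbedding)
    (fun S => S.map σ.toEmbedding) ?_ ?_ ?_ ?_ ?_
  · intro S hS
    simp only [Finset.mem_powersetCard_univ, Finset.card_map] at hS ⊢
    exact hS
  · intro S hS
    simp only [Finset.mem_powersetCard_univ, Finset.card_map] at hS ⊢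
    exact hS
  · intro S hS
    ext j
    simp
  · intro S hS
    ext j
    simp
  · intro S hS
    congr 1
    funext j
    have hiff : (σ j ∈ S) ↔ (j ∈ Finset.map σ.symm.toEmbedding S) := by
      constructor
      · intro h
        exact Finset.mem_map.2 ⟨σ j, h, σ.symm_apply_apply j⟩
      · intro h
        obtain ⟨s, hs, rfl⟩ := Finset.mem_map.1 h
        simpa using hs
    simp only [hiff]

/-- `e_i^n(a)` as an element of `TS^n_F(A)`. -/
noncomputable def esymT (i : ℕ) (a : A) : TS F A n := ⟨esym F A n i a, esym_mem F A n i a⟩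

lemma tprod_const_mem (a : A) : (tprod F (fun _ : Fin n => a)) ∈ TS F A n := fun σ => by
  simp

/-- `a^{⊗ n}` as an element of `TS^n_F(A)`. -/
noncomputable def tpow (a : A) : TS F A n := ⟨tprod F (fun _ : Fin n => a), tprod_const_mem F A n a⟩

/-!
Write `p y = e_1^n(y)`, the sum of the images of `y` under the `n` embeddings of `A` into its
tensor power. The sum of the signs of the permutations `σ` with `f ∘ σ = f` is `1` for injective
`f` and `0` otherwise. Hence the sum over the injections `f : Fin k ↪ Fin n` of the tensors with
`x_1, …, x_k` in the slots `f 1, …, f k` equals `∑ σ, sign σ * ∏ c, p (∏ i ∈ c, x_i)`, where `σ`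
runs over the permutations of `Fin k` and `c` over the cycles of `σ`.

For `k = n` the left side is the symmetrization of `x_1 ⊗ ⋯ ⊗ x_n`, and since `n!` is invertible
these span the symmetric tensors; so the `p y` generate. For `k = n + 1` the left side is empty, and
isolating the `n!` full cycles expresses `n! p (x_1 ⋯ x_{n+1})` through values of `p` at shorter
products. A monomial of degree greater than `n` is such a product of `n + 1` nontrivial monomials,
so the values of `p` at monomials of degree at most `n` suffice.
-/

section Cycles

open Equiv.Perm (SameCycle)

lemma apply_eq_of_sameCycle {ι J : Type*} {f : ι → J} {σ : Equiv.Perm ι} (hf : f ∘ σ = f)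
    {i j : ι} (h : σ.SameCycle i j) : f i = f j := by
  have hσ : Function.Semiconj f σ id := congrFun hf
  have hpow (k : ℕ) (l : ι) : f ((σ ^ k) l) = f l := by
    simpa [Equiv.Perm.iterate_eq_pow] using hσ.iterate_right k l
  obtain ⟨k | k, rfl⟩ := h
  · exact (hpow k i).symm
  · simpa using hpow (k + 1) ((σ ^ Int.negSucc k) i)

lemma cycleType_eq_singleton_card_iff {ι : Type*} [Fintype ι] [DecidableEq ι] [Nontrivial ι]
    {σ : Equiv.Perm ι} : σ.cycleType = {Fintype.card ι} ↔ ∀ i j, σ.SameCycle i j := by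
  constructor
  · intro hσ i j
    have hcycle : σ.IsCycle := by
      rw [← Equiv.Perm.card_cycleType_eq_one, hσ, Multiset.card_singleton]
    have hsupport : σ.support = Finset.univ := by
      rw [← Finset.card_eq_iff_eq_univ, ← σ.sum_cycleType, hσ, Multiset.sum_singleton]
    exact hcycle.sameCycle (Equiv.Perm.mem_support.mp (by simp [hsupport]))
      (Equiv.Perm.mem_support.mp (by simp [hsupport]))
  · intro hσ
    have hcycleOn : σ.IsCycleOn Set.univ := ⟨σ.bijective.bijOn_univ, fun i _ j _ => hσ i j⟩
    have hcycle : σ.IsCycle := Equiv.Perm.isCycle_iff_exists_isCycleOn.mpr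
      ⟨Set.univ, Set.nontrivial_univ, hcycleOn, fun i _ => Set.mem_univ i⟩
    have hsupport : σ.support = Finset.univ := Finset.eq_univ_of_forall fun i =>
      Equiv.Perm.mem_support.mpr (hcycleOn.apply_ne Set.nontrivial_univ (Set.mem_univ i))
    rw [hcycle.cycleType, hsupport, Finset.card_univ]

variable {ι M N : Type*} [Fintype ι] [CommMonoid M] [CommMonoid N]

open scoped Classical in
/-- The product of `p (∏ i ∈ c, x i)` over the cycles `c` of `σ`, fixed points included. For `p` a
trace this is the trace monomial of `σ`, with the cycles encoded as the classes of `SameCycle`. -/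
noncomputable def cycleProd (p : M → N) (σ : Equiv.Perm ι) (x : ι → M) : N :=
  ∏ c : Quotient (SameCycle.setoid σ), p (∏ i with Quotient.mk _ i = c, x i)

lemma cycleProd_of_forall_sameCycle [Nonempty ι] (p : M → N) {σ : Equiv.Perm ι}
    (hσ : ∀ i j, σ.SameCycle i j) (x : ι → M) : cycleProd p σ x = p (∏ i, x i) := by
  classical
  have hcycle (c : Quotient (SameCycle.setoid σ)) (i : ι) : Quotient.mk _ i = c :=
    Quotient.ind (fun j => Quotient.sound (hσ i j)) c
  have : Unique (Quotient (SameCycle.setoid σ)) :=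
    ⟨⟨Quotient.mk _ (Classical.arbitrary ι)⟩, fun c => (hcycle c _).symm⟩
  rw [cycleProd, Fintype.prod_unique, Finset.filter_true_of_mem fun i _ => hcycle _ i]

lemma cycleProd_mem_of_not_forall_sameCycle {S : Type*} [SetLike S N] [SubmonoidClass S N] {B : S}
    {p : M → N} {x : ι → M} (hp : ∀ s ≠ Finset.univ, p (∏ i ∈ s, x i) ∈ B) {σ : Equiv.Perm ι}
    (hσ : ¬ ∀ i j, σ.SameCycle i j) : cycleProd p σ x ∈ B := by
  classical
  refine prod_mem fun c _ => hp _ fun hc => hσ fun i j => ?_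
  have hmem (l : ι) : Quotient.mk _ l = c := (Finset.filter_eq_self.mp hc) l (Finset.mem_univ l)
  exact Quotient.exact ((hmem i).trans (hmem j).symm)

end Cycles

section SumOverInjections

open Equiv.Perm (SameCycle sign)

lemma sum_sign_comp_eq_self {ι J : Type*} [Fintype ι] [DecidableEq ι] [DecidableEq J] (f : ι → J)
    [Decidable f.Injective] :
    ∑ σ with f ∘ (σ : Equiv.Perm ι) = f, (sign σ : ℤ) = if f.Injective then 1 else 0 := by
  -- Both sides are the determinant of the matrix with entries `if f i = f j then 1 else 0`.
  calc ∑ σ with f ∘ (σ : Equiv.Perm ι) = f, (sign σ : ℤ)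
      = ((1 : Matrix J J ℤ).submatrix f f).det := by
        rw [Matrix.det_apply', Finset.sum_filter]
        refine Finset.sum_congr rfl fun σ _ => ?_
        simp [Matrix.one_apply, Finset.prod_ite_zero, funext_iff]
    _ = if f.Injective then 1 else 0 := by
        split_ifs with hf
        · rw [Matrix.submatrix_one _ hf, Matrix.det_one]
        · obtain ⟨i, j, hij, hne⟩ := Function.not_injective_iff.mp hf
          exact Matrix.det_zero_of_row_eq hne (congrArg (fun r l => (1 : Matrix J J ℤ) r (f l)) hij)

lemma sum_comp_eq_self_eq_sum_quotient {ι J E : Type*} [Fintype ι] [DecidableEq ι] [Fintype J]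
    [DecidableEq J] [AddCommMonoid E] (σ : Equiv.Perm ι) [Fintype (Quotient (SameCycle.setoid σ))]
    [DecidableEq (Quotient (SameCycle.setoid σ))] (g : (ι → J) → E) :
    ∑ f with f ∘ σ = f, g f
      = ∑ h : Quotient (SameCycle.setoid σ) → J, g (h ∘ Quotient.mk _) := by
  have hmk : Quotient.mk (SameCycle.setoid σ) ∘ σ = Quotient.mk _ :=
    funext fun i => Quotient.sound (SameCycle.refl σ i).apply_left
  symm
  refine Finset.sum_nbij (· ∘ Quotient.mk _) ?_ ?_ ?_ fun _ _ => rfl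
  · intro h _
    simp [Function.comp_assoc, hmk]
  · exact Quotient.mk_surjective.injective_comp_right.injOn
  · intro f hf
    have hf : f ∘ σ = f := by simpa using hf
    exact ⟨Quotient.lift f fun i j => apply_eq_of_sameCycle hf, by simp, rfl⟩

lemma sum_comp_eq_self_prod_eq_cycleProd {ι J M R Φ : Type*} [Fintype ι] [DecidableEq ι] [Fintype J]
    [DecidableEq J] [CommMonoid M] [CommSemiring R] [FunLike Φ M R] [MonoidHomClass Φ M R]
    (φ : J → Φ) (σ : Equiv.Perm ι) (x : ι → M) :
    ∑ f with f ∘ σ = f, ∏ i, φ (f i) (x i) = cycleProd (fun y => ∑ j, φ j y) σ x := by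
  classical
  rw [sum_comp_eq_self_eq_sum_quotient, cycleProd, Fintype.prod_sum]
  refine Finset.sum_congr rfl fun h _ => ?_
  rw [← Finset.prod_fiberwise _ (Quotient.mk (SameCycle.setoid σ))]
  refine Finset.prod_congr rfl fun c _ => ?_
  rw [map_prod]
  refine Finset.prod_congr rfl fun i hi => ?_
  rw [Function.comp_apply, (Finset.mem_filter.mp hi).2]

variable {ι J M R Φ : Type*} [Fintype ι] [CommMonoid M] [CommRing R] [FunLike Φ M R]
  [MonoidHomClass Φ M R]

theorem sum_embedding_prod_eq_sum_sign_smul_cycleProd [DecidableEq ι] [Fintype J] (φ : J → Φ)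
    (x : ι → M) :
    ∑ f : ι ↪ J, ∏ i, φ (f i) (x i)
      = ∑ σ : Equiv.Perm ι, (sign σ : ℤ) • cycleProd (fun y => ∑ j, φ j y) σ x := by
  classical
  calc ∑ f : ι ↪ J, ∏ i, φ (f i) (x i)
      = ∑ f : ι → J with f.Injective, ∏ i, φ (f i) (x i) := by
        rw [Finset.sum_subtype (p := Function.Injective) _ (by simp)]
        exact (Fintype.sum_equiv (Equiv.subtypeInjectiveEquivEmbedding ι J) _ _ fun _ => rfl).symm
    _ = ∑ f : ι → J, (∑ σ with f ∘ (σ : Equiv.Perm ι) = f, (sign σ : ℤ)) •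
          ∏ i, φ (f i) (x i) := by
        simp only [sum_sign_comp_eq_self, ite_smul, one_smul, zero_smul]
        exact Finset.sum_filter _ _
    _ = ∑ σ : Equiv.Perm ι, (sign σ : ℤ) • ∑ f : ι → J with f ∘ σ = f, ∏ i, φ (f i) (x i) := by
        simp only [Finset.sum_smul, Finset.smul_sum, Finset.sum_filter, ite_smul, zero_smul,
          smul_ite, smul_zero]
        exact Finset.sum_comm
    _ = ∑ σ : Equiv.Perm ι, (sign σ : ℤ) • cycleProd (fun y => ∑ j, φ j y) σ x := by
        simp only [sum_comp_eq_self_prod_eq_cycleProd]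

lemma sum_sign_smul_cycleProd_of_cycleType_eq_singleton_card [DecidableEq ι] [Nontrivial ι]
    (p : M → R) (x : ι → M) :
    ∑ σ : Equiv.Perm ι with σ.cycleType = {Fintype.card ι}, (sign σ : ℤ) • cycleProd p σ x
      = (-1 : ℤ) ^ (Fintype.card ι + 1) • (Fintype.card ι - 1).factorial • p (∏ i, x i) := by
  have hsummand : ∀ σ ∈ ({σ | σ.cycleType = {Fintype.card ι}} : Finset (Equiv.Perm ι)),
      (sign σ : ℤ) • cycleProd p σ x = (-1 : ℤ) ^ (Fintype.card ι + 1) • p (∏ i, x i) := by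
    intro σ hσ
    replace hσ := (Finset.mem_filter.mp hσ).2
    rw [cycleProd_of_forall_sameCycle p (cycleType_eq_singleton_card_iff.mp hσ),
      Equiv.Perm.sign_of_cycleType, hσ]
    simp
  rw [Finset.sum_congr rfl hsummand, Finset.sum_const,
    Equiv.Perm.card_of_cycleType_singleton Fintype.one_lt_card le_rfl, Nat.choose_self, mul_one,
    smul_comm]

variable [Fintype J] {S : Type*} [SetLike S R] [SubringClass S R] {B : S} {φ : J → Φ}

theorem sum_embedding_prod_mem (hB : ∀ y, ∑ j, φ j y ∈ B) (x : ι → M) :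
    ∑ f : ι ↪ J, ∏ i, φ (f i) (x i) ∈ B := by
  classical
  rw [sum_embedding_prod_eq_sum_sign_smul_cycleProd]
  exact sum_mem fun σ _ => zsmul_mem (prod_mem fun _ _ => hB _) _

theorem factorial_smul_sum_prod_mem (hcard : Fintype.card ι = Fintype.card J + 1) {x : ι → M}
    (hB : ∀ s ≠ Finset.univ, ∑ j, φ j (∏ i ∈ s, x i) ∈ B) :
    (Fintype.card J).factorial • ∑ j, φ j (∏ i, x i) ∈ B := by
  classical
  rcases isEmpty_or_nonempty J with _ | _
  · simp
  have : Nontrivial ι := Fintype.one_lt_card_iff_nontrivial.mp (by simp [hcard, Fintype.card_pos])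
  let p : M → R := fun y => ∑ j, φ j y
  have hsum : ∑ σ : Equiv.Perm ι, (sign σ : ℤ) • cycleProd p σ x = 0 := by
    have : IsEmpty (ι ↪ J) := Function.Embedding.isEmpty_of_card_lt (by omega)
    rw [← sum_embedding_prod_eq_sum_sign_smul_cycleProd, Fintype.sum_empty]
  have hother : ∑ σ : Equiv.Perm ι with σ.cycleType ≠ {Fintype.card ι},
      (sign σ : ℤ) • cycleProd p σ x ∈ B := by
    refine sum_mem fun σ hσ => zsmul_mem (cycleProd_mem_of_not_forall_sameCycle hB ?_) _
    rw [← cycleType_eq_singleton_card_iff]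
    exact (Finset.mem_filter.mp hσ).2
  rw [← Finset.sum_filter_add_sum_filter_not _ fun σ => σ.cycleType = {Fintype.card ι}] at hsum
  have hfull := eq_neg_of_add_eq_zero_left hsum ▸ neg_mem hother
  rw [sum_sign_smul_cycleProd_of_cycleType_eq_singleton_card, hcard, Nat.add_sub_cancel] at hfull
  obtain hsign | hsign := neg_one_pow_eq_or ℤ (Fintype.card J + 1 + 1)
  · simpa only [hsign, one_smul] using hfull
  · simpa only [hsign, neg_smul, one_smul, neg_mem_iff] using hfull

end SumOverInjections

section SymmetricTensors

/-- The embedding `y ↦ 1 ⊗ ⋯ ⊗ y ⊗ ⋯ ⊗ 1` of `A` as the `j`-th factor of its `n`-fold tensor power,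
so that `e_1^n(y)` is the sum of the images of `y` over all `j`. -/
noncomputable abbrev factorHom (j : Fin n) : A →ₐ[F] ⨂[F] _ : Fin n, A :=
  singleAlgHom (A := fun _ => A) j

variable {F A n}

lemma esym_one_eq_sum_factorHom (y : A) :
    esym F A n 1 y = ∑ j, factorHom F A n j y := by
  rw [esym, Finset.powersetCard_one, Finset.sum_map]
  refine Finset.sum_congr rfl fun j _ => congrArg (PiTensorProduct.tprod F) (funext fun i => ?_)
  simp [Pi.mulSingle_apply]

lemma tprod_eq_prod_factorHom (x : Fin n → A) :
    tprod F x = ∏ j, factorHom F A n j (x j) := by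
  simp only [factorHom, singleAlgHom_apply, ← tprod_prod, MonoidHom.mulSingle_apply,
    Finset.univ_prod_mulSingle]

lemma sum_permHom_tprod (x : Fin n → A) :
    ∑ σ, permHom F A n σ (tprod F x)
      = ∑ f : Fin n ↪ Fin n, ∏ i, factorHom F A n (f i) (x i) := by
  rw [← Equiv.sum_comp (Equiv.inv (Equiv.Perm (Fin n)))]
  refine Fintype.sum_equiv (Equiv.embeddingEquivOfFinite (Fin n)).symm _ _ fun σ => ?_
  rw [permHom_tprod, tprod_eq_prod_factorHom, ← Equiv.prod_comp σ]
  simp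

lemma mem_of_nsmul_mem_of_isUnit {V : Type*} [AddCommMonoid V] [Module F V] {k : ℕ}
    (hk : IsUnit (k : F)) {P : Submodule F V} {v : V} (hv : k • v ∈ P) : v ∈ P := by
  rw [← Nat.cast_smul_eq_nsmul F] at hv
  exact (P.smul_mem_iff_of_isUnit hk).mp hv

theorem TS_le_of_esym_one_mem (hn : IsUnit (n.factorial : F))
    {B : Subalgebra F (⨂[F] _ : Fin n, A)} (hB : ∀ y, esym F A n 1 y ∈ B) : TS F A n ≤ B := by
  have hsymm (s : ⨂[F] _ : Fin n, A) : ∑ σ, permHom F A n σ s ∈ B := by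
    induction s using PiTensorProduct.induction_on with
    | smul_tprod r x =>
      simp only [map_smul, ← Finset.smul_sum, sum_permHom_tprod]
      simp only [esym_one_eq_sum_factorHom] at hB
      exact B.smul_mem (sum_embedding_prod_mem hB x) r
    | add s t hs ht =>
      simp only [_root_.map_add, Finset.sum_add_distrib]
      exact B.add_mem hs ht
  intro t ht
  have hsum : ∑ σ, permHom F A n σ t = n.factorial • t := by
    rw [Finset.sum_congr rfl fun σ _ => ht σ, Finset.sum_const, Finset.card_univ,
      Fintype.card_perm, Fintype.card_fin]
  exact mem_of_nsmul_mem_of_isUnit (P := Subalgebra.toSubmodule B) hn (hsum ▸ hsymm t)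

lemma exists_sum_eq_of_lt_degree {ι : Type*} {k : ℕ} {α : ι →₀ ℕ} (hα : k < α.degree) :
    ∃ x : Fin (k + 1) → ι →₀ ℕ, ∑ i, x i = α ∧ ∀ i, x i ≠ 0 := by
  induction k generalizing α with
  | zero => exact ⟨fun _ => α, by simp, fun _ h => by simp [h] at hα⟩
  | succ k ih =>
    obtain ⟨j, hj⟩ : ∃ j, α j ≠ 0 := by
      by_contra! h
      simp [show α = 0 from Finsupp.ext h] at hα
    have hsplit := Finsupp.sub_add_single_one_cancel hj
    have hdeg : (α - Finsupp.single j 1).degree + 1 = α.degree := by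
      rw [← congrArg Finsupp.degree hsplit, _root_.map_add, Finsupp.degree_single]
    obtain ⟨x, hx, hx0⟩ := ih (α := α - Finsupp.single j 1) (by omega)
    refine ⟨Fin.cons (Finsupp.single j 1) x, ?_, Fin.cases (by simp) (by simpa using hx0)⟩
    rw [Fin.sum_cons, hx, add_comm, hsplit]

theorem esym_one_aeval_monomial_mem (hn : IsUnit (n.factorial : F)) {ι : Type*} {a : ι → A}
    {B : Subalgebra F (⨂[F] _ : Fin n, A)}
    (hB : ∀ α : ι →₀ ℕ, α.degree ≤ n →
      esym F A n 1 (MvPolynomial.aeval a (MvPolynomial.monomial α (1 : F))) ∈ B) (α : ι →₀ ℕ) :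
    esym F A n 1 (MvPolynomial.aeval a (MvPolynomial.monomial α (1 : F))) ∈ B := by
  induction hd : α.degree using Nat.strong_induction_on generalizing α with
  | _ d ih =>
  obtain hle | hlt := le_or_gt α.degree n
  · exact hB α hle
  obtain ⟨x, rfl, hx⟩ := exists_sum_eq_of_lt_degree hlt
  have hproper (s : Finset (Fin (n + 1))) (hs : s ≠ Finset.univ) :
      (∑ i ∈ s, x i).degree < d := by
    obtain ⟨i, hi⟩ : ∃ i, i ∉ s := by simpa [Finset.eq_univ_iff_forall] using hs
    rw [← hd, map_sum, map_sum]
    refine Finset.sum_lt_sum_of_subset s.subset_univ (Finset.mem_univ i) hi ?_ (by simp)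
    exact Nat.pos_of_ne_zero ((Finsupp.degree_eq_zero_iff _).not.mpr (hx i))
  have hfact := factorial_smul_sum_prod_mem (ι := Fin (n + 1)) (B := B)
    (φ := factorHom F A n)
    (x := fun i => MvPolynomial.aeval a (MvPolynomial.monomial (x i) (1 : F))) (by simp)
    (fun s hs => by
      simpa [esym_one_eq_sum_factorHom, MvPolynomial.monomial_sum_one] using
        ih _ (hproper s hs) _ rfl)
  refine mem_of_nsmul_mem_of_isUnit (P := Subalgebra.toSubmodule B) hn ?_
  simpa [esym_one_eq_sum_factorHom, MvPolynomial.monomial_sum_one] using hfact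

theorem esym_one_mem_of_adjoin_eq_top {ι : Type*} {a : ι → A}
    (ha : Algebra.adjoin F (Set.range a) = ⊤) {B : Subalgebra F (⨂[F] _ : Fin n, A)}
    (hB : ∀ α : ι →₀ ℕ,
      esym F A n 1 (MvPolynomial.aeval a (MvPolynomial.monomial α (1 : F))) ∈ B) (y : A) :
    esym F A n 1 y ∈ B := by
  have hy : y ∈ (MvPolynomial.aeval (R := F) a).range := by
    rw [← Algebra.adjoin_range_eq_range_aeval, ha]
    exact Algebra.mem_top
  obtain ⟨P, rfl⟩ : ∃ P, MvPolynomial.aeval (R := F) a P = y := hy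
  simp only [esym_one_eq_sum_factorHom] at hB ⊢
  induction P using MvPolynomial.induction_on' with
  | monomial α r =>
    rw [← mul_one r, ← smul_eq_mul, ← MvPolynomial.smul_monomial]
    simpa only [map_smul, ← Finset.smul_sum] using B.smul_mem (hB α) r
  | add P Q hP hQ =>
    simpa only [_root_.map_add, Finset.sum_add_distrib] using B.add_mem hP hQ

end SymmetricTensors

theorem ts_generated_by_esym_one_monomials_general (hn : IsUnit (n.factorial : F)) {ι : Type*}
    (a : ι → A) (ha : Algebra.adjoin F (Set.range a) = ⊤) :
    Algebra.adjoin F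
        {x : ⨂[F] _ : Fin n, A |
          ∃ α : ι →₀ ℕ, α.degree ≤ n ∧ x = esym F A n 1 (α.prod fun j k => a j ^ k)}
      = TS F A n := by
  refine le_antisymm (Algebra.adjoin_le ?_) (TS_le_of_esym_one_mem hn fun y => ?_)
  · rintro _ ⟨α, -, rfl⟩
    exact esym_mem F A n 1 _
  · refine esym_one_mem_of_adjoin_eq_top ha (esym_one_aeval_monomial_mem hn fun α hα => ?_) y
    exact Algebra.subset_adjoin ⟨α, hα, by rw [MvPolynomial.aeval_monomial, map_one, one_mul]⟩

/-- **Generators in characteristic zero.** If `F ⊇ ℚ` and the flat commutative `F`-algebra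
`A` is generated by `a_1, …, a_m`, then `TS^n_F(A)` is generated as an `F`-algebra by the
elements `e_1^n(a)`, `a` ranging over monomials in the `a_j` of total degree at most `n`. -/
theorem ts_generated_by_esym_one_monomials [Algebra ℚ F] [Module.Flat F A]
    (m : ℕ) (a : Fin m → A) (ha : Algebra.adjoin F (Set.range a) = ⊤) :
    Algebra.adjoin F
        {x : ⨂[F] _ : Fin n, A |
          ∃ α : Fin m → ℕ, (∑ j, α j) ≤ n ∧ x = esym F A n 1 (∏ j, a j ^ α j)}
      = TS F A n := by
  have hn : IsUnit (n.factorial : F) := by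
    simpa using (IsUnit.mk0 (n.factorial : ℚ) (by positivity)).map (algebraMap ℚ F)
  rw [← ts_generated_by_esym_one_monomials_general F A n hn a ha]
  refine congrArg (Algebra.adjoin F) (Set.ext fun x => ?_)
  refine (Finsupp.equivFunOnFinite.exists_congr fun α => ?_).symm
  simp [Finsupp.degree_eq_sum, Finsupp.prod_fintype]

end SymmetricProduct
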